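/- For all integers 0 ≤ i < j < k, the polynomial N_{2i}(q)·N_{j+k}(q)² + N_{2j}(q)·N_{i+k}(q)² + N_{2k}(q)·N_{i+j}(q)² − 3·N_{i+j}(q)·N_{j+k}(q)·N_{k+i}(q) is q-nonnegative, where N_n(q) is the n-th Narayana polynomial of type A. -/

import Mathlib

/-!
The Narayana polynomials are the moments of the continued fraction with diagonal coefficients
`q, 1 + q, 1 + q, …` and off-diagonal coefficients `q, q, …`. Its Stieltjes array `stieltjes n k`
(weighted Motzkin prefixes of length `n` ending at height `k`) has `q`-nonnegative entries, all of
its `2 × 2` minors are `q`-nonnegative (`stieltjes_minor`, by induction on the rows, because the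
tridiagonal production matrix is totally positive of order two), and
`N_{n+m} = ∑ₖ qᵏ stieltjes n k * stieltjes m k` (`narayanaPoly_add`). That column `0` of the array
really is `N_n` follows from a closed formula for all coefficients of the array
(`stieltjes_coeff`), which is a `2 × 2` determinant of binomial coefficients.

Let `u, v, w` be the rows `i < j < k` of the array. Substituting the sums turns the polynomial of
the theorem into a triple sum over columns `l, m, n` with positive weight `q^(l+m+n)`. After
symmetrizing over the permutations of `(l, m, n)`, the summand for `l ≤ m ≤ n` is an explicit sum
of six products of entries and `2 × 2` minors of the matrix formed by the rows `u, v, w` and the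
columns `l, m, n` (`kernel_symm`), so it is `q`-nonnegative.
-/

open Polynomial

/-- A polynomial is `q`-nonnegative if all of its coefficients are nonnegative. -/
def QNonneg (f : Polynomial ℝ) : Prop := ∀ i, 0 ≤ f.coeff i

/-- The Narayana polynomials of type A: `N_0(q) = 1` and, for `n ≥ 1`,
`N_n(q) = Σ_{k=1}^{n} (1/n)·C(n,k-1)·C(n,k)·q^k`. -/
noncomputable def narayanaPoly : ℕ → Polynomial ℝ
  | 0 => 1
  | n + 1 => ∑ k ∈ Finset.Icc 1 (n + 1),
      Polynomial.C ((((n + 1).choose (k - 1) : ℝ) * ((n + 1).choose k : ℝ)) / (n + 1)) *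
        Polynomial.X ^ k

/-! ### Closure properties of `q`-nonnegativity -/

theorem qn_zero : QNonneg 0 := fun _ => by simp

theorem qn_one : QNonneg 1 := fun i => by
  rw [coeff_one]; split_ifs <;> norm_num

theorem qn_X : QNonneg X := fun i => by
  rw [coeff_X]; split_ifs <;> norm_num

theorem qn_add {f g : ℝ[X]} (hf : QNonneg f) (hg : QNonneg g) : QNonneg (f + g) := fun i => by
  rw [coeff_add]; exact add_nonneg (hf i) (hg i)

theorem qn_mul {f g : ℝ[X]} (hf : QNonneg f) (hg : QNonneg g) : QNonneg (f * g) := fun i => by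
  rw [coeff_mul]; exact Finset.sum_nonneg fun x _ => mul_nonneg (hf _) (hg _)

theorem qn_pow {f : ℝ[X]} (hf : QNonneg f) (n : ℕ) : QNonneg (f ^ n) := by
  induction n with
  | zero => simpa using qn_one
  | succ n ih => rw [pow_succ]; exact qn_mul ih hf

theorem qn_sum {s : Finset ℕ} {f : ℕ → ℝ[X]} (hf : ∀ i, QNonneg (f i)) :
    QNonneg (∑ i ∈ s, f i) := fun r => by
  rw [finsetSum_coeff]; exact Finset.sum_nonneg fun i _ => hf i r

/-- A triple sum is `q`-nonnegative once the symmetrization of its summand is so at weakly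
increasing triples of indices. -/
theorem qn_triple_sum (M : ℕ) (f : ℕ → ℕ → ℕ → ℝ[X])
    (hf : ∀ l m n, l ≤ m → m ≤ n →
      QNonneg (f l m n + f l n m + f m l n + f m n l + f n l m + f n m l)) :
    QNonneg (∑ l ∈ Finset.range M, ∑ m ∈ Finset.range M, ∑ n ∈ Finset.range M, f l m n) := by
  set s := Finset.range M
  have hall : ∀ l m n, QNonneg (f l m n + f l n m + f m l n + f m n l + f n l m + f n m l) := by
    intro l m n
    rcases le_total l m with h1 | h1 <;> rcases le_total m n with h2 | h2 <;>
      rcases le_total l n with h3 | h3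
    · convert hf l m n h1 h2 using 1
    · convert hf l m n h1 h2 using 1
    · convert hf l n m h3 h2 using 1; ring
    · convert hf n l m h3 h1 using 1; ring
    · convert hf m l n h1 h3 using 1; ring
    · convert hf m n l h2 h3 using 1; ring
    · convert hf n m l h2 h1 using 1; ring
    · convert hf n m l h2 h1 using 1; ring
  have e1 : ∑ l ∈ s, ∑ m ∈ s, ∑ n ∈ s, f l n m = ∑ l ∈ s, ∑ m ∈ s, ∑ n ∈ s, f l m n :=
    Finset.sum_congr rfl fun l _ => Finset.sum_comm
  have e2 : ∑ l ∈ s, ∑ m ∈ s, ∑ n ∈ s, f m l n = ∑ l ∈ s, ∑ m ∈ s, ∑ n ∈ s, f l m n :=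
    Finset.sum_comm
  have e3 : ∑ l ∈ s, ∑ m ∈ s, ∑ n ∈ s, f m n l = ∑ l ∈ s, ∑ m ∈ s, ∑ n ∈ s, f l m n := by
    rw [Finset.sum_comm]
    exact Finset.sum_congr rfl fun l _ => Finset.sum_comm
  have e4 : ∑ l ∈ s, ∑ m ∈ s, ∑ n ∈ s, f n l m = ∑ l ∈ s, ∑ m ∈ s, ∑ n ∈ s, f l m n := by
    rw [← e2]
    exact Finset.sum_congr rfl fun l _ => Finset.sum_comm
  have e5 : ∑ l ∈ s, ∑ m ∈ s, ∑ n ∈ s, f n m l = ∑ l ∈ s, ∑ m ∈ s, ∑ n ∈ s, f l m n := by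
    rw [← e3]
    exact Finset.sum_congr rfl fun l _ => Finset.sum_comm
  have key : QNonneg (∑ l ∈ s, ∑ m ∈ s, ∑ n ∈ s,
      (f l m n + f l n m + f m l n + f m n l + f n l m + f n m l)) :=
    qn_sum fun l => qn_sum fun m => qn_sum fun n => hall l m n
  simp only [Finset.sum_add_distrib, e1, e2, e3, e4, e5] at key
  intro r
  have := key r
  simp only [coeff_add] at this
  linarith

/-! ### The Stieltjes array of the Narayana polynomials -/

/-- The Stieltjes array of the continued fraction with diagonal coefficients `q, 1 + q, 1 + q, …`
and off-diagonal coefficients `q, q, …`: the entry `stieltjes n k` counts weighted Motzkin prefixes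
of length `n` ending at height `k`, with up steps of weight `1`. The variable `X` plays the role
of `q`. -/
noncomputable def stieltjes : ℕ → ℕ → ℝ[X]
  | 0, 0 => 1
  | 0, _ + 1 => 0
  | n + 1, 0 => X * stieltjes n 0 + X * stieltjes n 1
  | n + 1, k + 1 => stieltjes n k + (1 + X) * stieltjes n (k + 1) + X * stieltjes n (k + 2)

theorem stieltjes_nonneg (n k : ℕ) : QNonneg (stieltjes n k) := by
  induction n generalizing k with
  | zero => cases k with
    | zero => exact qn_one
    | succ k => exact qn_zero
  | succ n ih => cases k with
    | zero => exact qn_add (qn_mul qn_X (ih _)) (qn_mul qn_X (ih _))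
    | succ k =>
      exact qn_add (qn_add (ih _) (qn_mul (qn_add qn_one qn_X) (ih _))) (qn_mul qn_X (ih _))

theorem stieltjes_eq_zero {n k : ℕ} (h : n < k) : stieltjes n k = 0 := by
  induction n generalizing k with
  | zero => cases k with
    | zero => omega
    | succ k => rfl
  | succ n ih => cases k with
    | zero => omega
    | succ k =>
      simp only [stieltjes]
      rw [ih (by omega), ih (by omega), ih (by omega)]; ring

/-- The Stieltjes array is totally positive of order two, coefficientwise. The only minor of the
preceding rows that enters the row step with a negative sign is the one on columns `a, a + 1` coming
from the off-diagonal coefficients; it is absorbed by the product of the two diagonal ones. -/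
theorem stieltjes_minor {n m a b : ℕ} (hnm : n ≤ m) (hab : a ≤ b) :
    QNonneg (stieltjes n a * stieltjes m b - stieltjes n b * stieltjes m a) := by
  induction n generalizing m a b with
  | zero =>
    cases b with
    | zero =>
      obtain rfl : a = 0 := by omega
      rw [sub_self]; exact qn_zero
    | succ b =>
      cases a with
      | zero => simpa [stieltjes] using stieltjes_nonneg m (b + 1)
      | succ a => simpa [stieltjes] using qn_zero
  | succ n ih =>
    obtain ⟨m, rfl⟩ : ∃ m', m = m' + 1 := ⟨m - 1, by omega⟩
    have p : ∀ a b, a ≤ b →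
        QNonneg (stieltjes n a * stieltjes m b - stieltjes n b * stieltjes m a) :=
      fun a b h => ih (by omega) h
    obtain ⟨c, rfl⟩ := Nat.exists_eq_add_of_le hab
    rcases a with _ | a <;> rcases c with _ | _ | c
    · rw [Nat.add_zero, sub_self]; exact qn_zero
    · have h := qn_add (qn_add (qn_mul (qn_pow qn_X 2) (p 0 1 (by omega)))
        (qn_mul (qn_pow qn_X 2) (p 0 2 (by omega)))) (qn_mul (qn_pow qn_X 2) (p 1 2 (by omega)))
      convert h using 1
      simp only [stieltjes, Nat.zero_add]
      ring
    · rw [show 0 + (c + 1 + 1) = c + 1 + 1 by omega]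
      have d := qn_add qn_one qn_X
      have h := qn_add (qn_add (qn_add (qn_add (qn_add
        (qn_mul qn_X (p 0 (c + 1) (by omega)))
        (qn_mul (qn_mul qn_X d) (p 0 (c + 2) (by omega))))
        (qn_mul (qn_pow qn_X 2) (p 0 (c + 3) (by omega))))
        (qn_mul qn_X (p 1 (c + 1) (by omega))))
        (qn_mul (qn_mul qn_X d) (p 1 (c + 2) (by omega))))
        (qn_mul (qn_pow qn_X 2) (p 1 (c + 3) (by omega)))
      convert h using 1
      simp only [stieltjes]
      ring
    · rw [Nat.add_zero, sub_self]; exact qn_zero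
    · rw [show a + 1 + (0 + 1) = a + 1 + 1 by omega]
      have d := qn_add qn_one qn_X
      have h := qn_add (qn_add (qn_add (qn_add (qn_add
        (p a (a + 1) (by omega))
        (qn_mul d (p a (a + 2) (by omega))))
        (qn_mul qn_X (p a (a + 3) (by omega))))
        (qn_mul (qn_add d (qn_pow qn_X 2)) (p (a + 1) (a + 2) (by omega))))
        (qn_mul (qn_mul d qn_X) (p (a + 1) (a + 3) (by omega))))
        (qn_mul (qn_pow qn_X 2) (p (a + 2) (a + 3) (by omega)))
      convert h using 1
      simp only [stieltjes]
      ring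
    · rw [show a + 1 + (c + 1 + 1) = (a + c + 2) + 1 by omega]
      have d := qn_add qn_one qn_X
      have h := qn_add (qn_add (qn_add (qn_add (qn_add (qn_add (qn_add (qn_add
        (p a (a + c + 2) (by omega))
        (qn_mul d (p a (a + c + 3) (by omega))))
        (qn_mul qn_X (p a (a + c + 4) (by omega))))
        (qn_mul d (p (a + 1) (a + c + 2) (by omega))))
        (qn_mul (qn_mul d d) (p (a + 1) (a + c + 3) (by omega))))
        (qn_mul (qn_mul d qn_X) (p (a + 1) (a + c + 4) (by omega))))
        (qn_mul qn_X (p (a + 2) (a + c + 2) (by omega))))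
        (qn_mul (qn_mul d qn_X) (p (a + 2) (a + c + 3) (by omega))))
        (qn_mul (qn_pow qn_X 2) (p (a + 2) (a + c + 4) (by omega)))
      convert h using 1
      simp only [stieltjes]
      ring

/-! ### Column zero consists of the Narayana polynomials -/

/-- The binomial coefficient `C(n, z)` for an integer `z`, equal to `0` when `z < 0`. -/
noncomputable def intChoose (n : ℕ) (z : ℤ) : ℝ := if z < 0 then 0 else (n.choose z.toNat : ℝ)

theorem intChoose_natCast (n k : ℕ) : intChoose n (k : ℤ) = n.choose k := by
  simp [intChoose]

theorem intChoose_neg (n : ℕ) {z : ℤ} (h : z < 0) : intChoose n z = 0 := by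
  simp [intChoose, h]

theorem intChoose_succ (n : ℕ) (z : ℤ) :
    intChoose (n + 1) z = intChoose n z + intChoose n (z - 1) := by
  rcases lt_or_ge z 0 with h | h
  · rw [intChoose_neg _ h, intChoose_neg _ h, intChoose_neg _ (by omega), add_zero]
  · lift z to ℕ using h
    cases z with
    | zero =>
      rw [intChoose_neg n (z := ((0 : ℕ) : ℤ) - 1) (by norm_num), intChoose_natCast,
        intChoose_natCast]
      simp
    | succ k =>
      rw [show ((k + 1 : ℕ) : ℤ) - 1 = (k : ℤ) by push_cast; ring, intChoose_natCast,
        intChoose_natCast, intChoose_natCast, Nat.choose_succ_succ]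
      push_cast; ring

theorem intChoose_zero (z : ℤ) : intChoose 0 z = if z = 0 then 1 else 0 := by
  rcases lt_or_ge z 0 with h | h
  · rw [intChoose_neg _ h, if_neg (by omega)]
  · lift z to ℕ using h
    rw [intChoose_natCast]
    cases z with
    | zero => simp
    | succ k => rw [if_neg (by omega)]; simp

/-- All coefficients of the Stieltjes array. Multiplying out Pascal's rule in each of the two
products reproduces the recurrence of the array term by term. -/
theorem stieltjes_coeff (n k r : ℕ) :
    (stieltjes (n + 1) k).coeff r =
      intChoose (n + 1) r * intChoose n (r + k - 1) -
        intChoose (n + 1) (r - 1) * intChoose n (r + k) := by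
  induction n generalizing k r with
  | zero =>
    rcases k with _ | _ | k <;>
      simp only [stieltjes, mul_one, mul_zero, add_zero, zero_add, coeff_X, coeff_one, coeff_zero,
        intChoose_succ, intChoose_zero] <;>
      push_cast <;> split_ifs <;> first | omega | norm_num
  | succ n ih =>
    -- Coefficients of `X * f`, stated so that the index `r - 1 = -1` needs no separate treatment.
    have hX : ∀ k : ℕ, (X * stieltjes (n + 1) k).coeff r =
        intChoose (n + 1) (r - 1) * intChoose n (r - 1 + k - 1) -
        intChoose (n + 1) (r - 1 - 1) * intChoose n (r - 1 + k) := by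
      intro k
      cases r with
      | zero =>
        rw [intChoose_neg (n + 1) (by norm_num), intChoose_neg (n + 1) (by norm_num)]
        simp
      | succ r =>
        rw [coeff_X_mul, ih]
        push_cast
        simp only [add_sub_cancel_right]
    rw [intChoose_succ (n + 1) r, intChoose_succ (n + 1) (r - 1)]
    cases k with
    | zero =>
      rw [show stieltjes (n + 1 + 1) 0 = X * stieltjes (n + 1) 0 + X * stieltjes (n + 1) 1 from rfl,
        coeff_add, hX, hX, intChoose_succ n (r + (0 : ℕ) - 1), intChoose_succ n (r + (0 : ℕ)),
        intChoose_succ n r, intChoose_succ n (r - 1), intChoose_succ n (r - 1 - 1)]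
      simp only [Nat.cast_zero, Nat.cast_one, add_zero, sub_add_cancel]
      ring
    | succ k =>
      rw [show stieltjes (n + 1 + 1) (k + 1) = stieltjes (n + 1) k + (1 + X) * stieltjes (n + 1) (k + 1)
          + X * stieltjes (n + 1) (k + 2) from rfl, add_mul 1 X, one_mul, coeff_add, coeff_add, coeff_add, hX, hX, ih, ih, intChoose_succ n (r + (k + 1 : ℕ) - 1),
        intChoose_succ n (r + (k + 1 : ℕ))]
      push_cast
      rw [show (r : ℤ) + (k + 1) - 1 = r + k by ring,
        show (r : ℤ) - 1 + (k + 1) - 1 = r + k - 1 by ring,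
        show (r : ℤ) - 1 + (k + 1) = r + k by ring, show (r : ℤ) - 1 + (k + 2) - 1 = r + k by ring,
        show (r : ℤ) - 1 + (k + 2) = r + (k + 1) by ring]
      ring

theorem narayanaPoly_eq_stieltjes (n : ℕ) : narayanaPoly n = stieltjes n 0 := by
  cases n with
  | zero => rfl
  | succ n =>
    ext r
    rw [stieltjes_coeff]
    simp only [narayanaPoly, finsetSum_coeff, coeff_C_mul, coeff_X_pow, mul_ite, mul_one, mul_zero,
      Finset.sum_ite_eq, Finset.mem_Icc]
    cases r with
    | zero =>
      rw [intChoose_neg n (z := ((0 : ℕ) : ℤ) + ((0 : ℕ) : ℤ) - 1) (by norm_num),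
        intChoose_neg (n + 1) (z := ((0 : ℕ) : ℤ) - 1) (by norm_num)]
      simp
    | succ s =>
      rw [show ((s + 1 : ℕ) : ℤ) - 1 = (s : ℤ) by push_cast; ring,
        show ((s + 1 : ℕ) : ℤ) + ((0 : ℕ) : ℤ) = ((s + 1 : ℕ) : ℤ) by simp,
        show ((s + 1 : ℕ) : ℤ) - 1 = (s : ℤ) by push_cast; ring]
      simp only [intChoose_natCast, Nat.add_sub_cancel]
      split_ifs with h
      · have hs : s ≤ n + 1 := by omega
        have h1 : ((n : ℝ) + 1) * n.choose s = (n + 1).choose (s + 1) * (s + 1) := by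
          exact_mod_cast Nat.add_one_mul_choose_eq n s
        have h2 : ((n + 1).choose (s + 1) : ℝ) * (s + 1) = (n + 1).choose s * (n + 1 - s) := by
          have := Nat.choose_succ_right_eq (n + 1) s
          zify [hs] at this
          exact_mod_cast this
        have h3 : ((n + 1).choose (s + 1) : ℝ) = n.choose s + n.choose (s + 1) := by
          exact_mod_cast Nat.choose_succ_succ n s
        have h4 : (n : ℝ) + 1 ≠ 0 := by positivity
        rw [div_eq_iff h4]
        have h5 : (n.choose (s + 1) : ℝ) = (n + 1).choose (s + 1) - n.choose s := by linarith
        rw [h5]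
        linear_combination (-((n + 1).choose (s + 1) : ℝ) - ((n + 1).choose s : ℝ)) * h1 -
          ((n + 1).choose (s + 1) : ℝ) * h2
      · have : n + 1 < s + 1 := by omega
        rw [Nat.choose_eq_zero_of_lt this, Nat.choose_eq_zero_of_lt (show n < s + 1 by omega)]
        simp

/-! ### The Hankel matrix as a Gram matrix -/

/-- Moving one step from the first to the second row changes the truncated weighted product of two
rows only by a boundary term: multiplication by the Jacobi matrix is symmetric for the weights
`qᵏ`. -/
theorem stieltjes_shift (n m M : ℕ) :
    ∑ k ∈ Finset.range (M + 1), X ^ k * (stieltjes (n + 1) k * stieltjes m k) =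
      ∑ k ∈ Finset.range (M + 1), X ^ k * (stieltjes n k * stieltjes (m + 1) k) +
        X ^ (M + 1) * (stieltjes n (M + 1) * stieltjes m M - stieltjes n M * stieltjes m (M + 1)) := by
  induction M with
  | zero => simp [stieltjes]; ring
  | succ M ih =>
    rw [Finset.sum_range_succ, ih, Finset.sum_range_succ _ (M + 1)]
    simp only [stieltjes]
    ring

theorem stieltjes_gram {n m M : ℕ} (h : n + m ≤ M) :
    ∑ k ∈ Finset.range (M + 1), X ^ k * (stieltjes n k * stieltjes m k) = stieltjes (n + m) 0 := by
  induction n generalizing m with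
  | zero =>
    rw [Finset.sum_range_succ']
    simp [stieltjes]
  | succ n ih =>
    rw [stieltjes_shift, ih (by omega), stieltjes_eq_zero (show n < M + 1 by omega),
      stieltjes_eq_zero (show m < M + 1 by omega), show n + 1 + m = n + (m + 1) by omega]
    ring

theorem narayanaPoly_add {n m M : ℕ} (h : n + m ≤ M) :
    narayanaPoly (n + m) =
      ∑ k ∈ Finset.range (M + 1), X ^ k * (stieltjes n k * stieltjes m k) := by
  rw [stieltjes_gram h, narayanaPoly_eq_stieltjes]

/-! ### The cubic expression in the Gram matrix -/

/-- The summand at columns `l, m, n` after inserting the Gram sums of the rows `u, v, w`, without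
the weight `q^(l+m+n)`. -/
noncomputable def kernel (u v w : ℕ → ℝ[X]) (l m n : ℕ) : ℝ[X] :=
  u l * u l * (v m * w m) * (v n * w n) + v l * v l * (u m * w m) * (u n * w n) +
    w l * w l * (u m * v m) * (u n * v n) - 3 * ((u l * v l) * (v m * w m) * (u n * w n))

/-- The symmetrized kernel as a positive combination of products of entries and `2 × 2` minors. -/
theorem kernel_symm (u v w : ℕ → ℝ[X]) (l m n : ℕ) :
    kernel u v w l m n + kernel u v w l n m + kernel u v w m l n + kernel u v w m n l +
        kernel u v w n l m + kernel u v w n m l =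
      u n * w l * (u l * v m - u m * v l) * (v m * w n - v n * w m) +
      2 * (u m * u n * (v l * w m - v m * w l) * (v l * w n - v n * w l)) +
      2 * (u l * v l * (u m * w n - u n * w m) * (v m * w n - v n * w m)) +
      2 * (v n * w n * (u l * v m - u m * v l) * (u l * w m - u m * w l)) +
      u l * w n * (u m * v n - u n * v m) * (v l * w m - v m * w l) +
      2 * (w l * w m * (u l * v n - u n * v l) * (u m * v n - u n * v m)) := by
  unfold kernel
  ring

theorem kernel_symm_nonneg {i j k l m n : ℕ} (hij : i ≤ j) (hjk : j ≤ k) (hlm : l ≤ m)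
    (hmn : m ≤ n) :
    let G := kernel (stieltjes i) (stieltjes j) (stieltjes k)
    QNonneg (G l m n + G l n m + G m l n + G m n l + G n l m + G n m l) := by
  intro G
  have hik := hij.trans hjk
  have hln := hlm.trans hmn
  have h2 : QNonneg 2 := by rw [← one_add_one_eq_two]; exact qn_add qn_one qn_one
  have e := stieltjes_nonneg
  rw [show G = kernel (stieltjes i) (stieltjes j) (stieltjes k) from rfl, kernel_symm]
  refine qn_add (qn_add (qn_add (qn_add (qn_add ?_ (qn_mul h2 ?_)) (qn_mul h2 ?_))
    (qn_mul h2 ?_)) ?_) (qn_mul h2 ?_) <;>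
  refine qn_mul (qn_mul (qn_mul (e _ _) (e _ _)) (stieltjes_minor ?_ ?_)) (stieltjes_minor ?_ ?_) <;>
  assumption

theorem gram_expand (M : ℕ) (u v w : ℕ → ℝ[X]) :
    let S := fun a b : ℕ → ℝ[X] => ∑ k ∈ Finset.range M, X ^ k * (a k * b k)
    S u u * S v w ^ 2 + S v v * S u w ^ 2 + S w w * S u v ^ 2 - 3 * (S u v * S v w * S u w) =
      ∑ l ∈ Finset.range M, ∑ m ∈ Finset.range M, ∑ n ∈ Finset.range M,
        X ^ (l + m + n) * kernel u v w l m n := by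
  intro S
  have triple : ∀ a b c : ℕ → ℝ[X],
      (∑ l ∈ Finset.range M, a l) * (∑ m ∈ Finset.range M, b m) * (∑ n ∈ Finset.range M, c n) =
      ∑ l ∈ Finset.range M, ∑ m ∈ Finset.range M, ∑ n ∈ Finset.range M, a l * b m * c n := by
    intro a b c
    rw [Finset.sum_mul_sum, Finset.sum_mul]
    refine Finset.sum_congr rfl fun l _ => ?_
    rw [Finset.sum_mul_sum]
  simp only [S, pow_two, ← mul_assoc (∑ k ∈ Finset.range M, _), triple]
  simp only [Finset.mul_sum, ← Finset.sum_add_distrib, ← Finset.sum_sub_distrib]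
  refine Finset.sum_congr rfl fun l _ => Finset.sum_congr rfl fun m _ =>
    Finset.sum_congr rfl fun n _ => ?_
  unfold kernel
  ring

theorem stmt15 (i j k : ℕ) (hij : i < j) (hjk : j < k) :
    QNonneg (narayanaPoly (2 * i) * narayanaPoly (j + k) ^ 2 +
             narayanaPoly (2 * j) * narayanaPoly (i + k) ^ 2 +
             narayanaPoly (2 * k) * narayanaPoly (i + j) ^ 2 -
             3 * (narayanaPoly (i + j) * narayanaPoly (j + k) * narayanaPoly (k + i))) := by
  have hN : ∀ a b, a ≤ k → b ≤ k → narayanaPoly (a + b) =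
      ∑ c ∈ Finset.range (2 * k + 1), X ^ c * (stieltjes a c * stieltjes b c) :=
    fun a b ha hb => narayanaPoly_add (by omega)
  rw [two_mul i, two_mul j, two_mul k, add_comm k i]
  rw [hN i i (by omega) (by omega), hN j j (by omega) (by omega), hN k k le_rfl le_rfl,
    hN i j (by omega) (by omega), hN j k (by omega) le_rfl, hN i k (by omega) le_rfl, gram_expand]
  refine qn_triple_sum _ _ fun l m n hlm hmn => ?_
  have h := qn_mul (qn_pow qn_X (l + m + n)) (kernel_symm_nonneg hij.le hjk.le hlm hmn)
  convert h using 1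
  ring
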